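/- Let d ∈ ℕ and 0 < α < d. There exists a constant c₁ > 0, depending only on α and d, such that for every θ ∈ [0,1] and all Lebesgue-measurable sets A, B ⊆ ℝ^d of finite measure, ‖I_α^θ(χ_A, χ_B)‖_{L^{d/(2d−α), ∞}(ℝ^d)} ≤ c₁ |A| |B|. -/

import Mathlib

open MeasureTheory ENNReal

/-- The bilinear fractional integral operator
`I_α^θ(f,g)(x) = ∫_{ℝ^d} f(x + (θ−1)y) g(x + θy) |y|^{α−d} dy`. -/
noncomputable def Iop (d : ℕ) (α θ : ℝ)
    (f g : EuclideanSpace ℝ (Fin d) → ℝ≥0∞) (x : EuclideanSpace ℝ (Fin d)) : ℝ≥0∞ :=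
  ∫⁻ y : EuclideanSpace ℝ (Fin d),
    f (x + (θ - 1) • y) * g (x + θ • y) * ENNReal.ofReal (‖y‖ ^ (α - (d : ℝ)))

/-- The weak `L^r` quasi-norm `sup_{λ > 0} λ · |{x : h x > λ}|^{1/r}`. -/
noncomputable def wLp (d : ℕ) (r : ℝ)
    (h : EuclideanSpace ℝ (Fin d) → ℝ≥0∞) : ℝ≥0∞ :=
  ⨆ (lam : ℝ) (_ : 0 < lam),
    ENNReal.ofReal lam * (volume {x | ENNReal.ofReal lam < h x}) ^ (1 / r)

/-!
Split `|y|^{α-d}` at `|y| = R`. On the far part the kernel is at most `R^{α-d}`, and since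
`∬ f(x + (θ-1)y) g(x + θy) dy dx = ‖f‖₁ ‖g‖₁` the far part is bounded in `L¹` uniformly in `θ`.

The near part is bounded in `L^{1/2}`. Let `B_r` be the operator with kernel `1_{|y| ≤ r}`. For `x`
in the ball `B(z, r)` both `x + (θ-1)y` and `x + θy` stay in `B(z, 2r)`, as `θ ∈ [0, 1]`; hence
`∫_{B(z,r)} B_r(f, g) ≤ ∫_{B(z,2r)} f · ∫_{B(z,2r)} g`. Two applications of Cauchy–Schwarz, on
`B(z, r)` and then in `z`, give `∫ B_r(f, g)^{1/2} ≤ 2^d |B(0, r)|^{1/2} (‖f‖₁ ‖g‖₁)^{1/2}`. As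
`t ↦ t^{1/2}` is subadditive, these bounds can be summed over `r = R, R/2, R/4, …`, where they are
a geometric series of ratio `2^{-α/2}` and sum to a multiple of `R^{α/2} (‖f‖₁ ‖g‖₁)^{1/2}`.

With `R` chosen so that `‖f‖₁ ‖g‖₁ = λ R^{2d-α} / 2`, Chebyshev's inequality bounds the level set
`{I_α^θ(f, g) > λ}` by a multiple of `R^d` on both parts, which is the weak-type estimate.
-/

open Module Metric
open scoped NNReal

/-- The weak `L^r` quasi-norm of `wLp`, on an arbitrary measure space. -/
noncomputable def weakLpNorm {X : Type*} [MeasurableSpace X] (μ : Measure X) (r : ℝ)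
    (h : X → ℝ≥0∞) : ℝ≥0∞ :=
  ⨆ (lam : ℝ) (_ : 0 < lam),
    ENNReal.ofReal lam * (μ {x | ENNReal.ofReal lam < h x}) ^ (1 / r)

/-- The bilinear operator `f, g ↦ ∫ f(x + (θ-1)y) g(x + θy) K(y) dμ(y)` with an arbitrary kernel
`K`. The operator `I_α^θ` has the kernel `rieszKernel α`; truncated and constant kernels give the
pieces into which it is decomposed. -/
noncomputable def bilinearIntegral {E : Type*} [NormedAddCommGroup E] [NormedSpace ℝ E]
    [MeasurableSpace E] (μ : Measure E) (θ : ℝ) (K f g : E → ℝ≥0∞) (x : E) : ℝ≥0∞ :=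
  ∫⁻ y, f (x + (θ - 1) • y) * g (x + θ • y) * K y ∂μ

/-- The Riesz kernel `|y|^{α-d}`, where `d` is the dimension of the space. At `y = 0` it takes the
value `0` when `α < d`, since negative real powers of `0` are `0`. -/
noncomputable def rieszKernel {E : Type*} [NormedAddCommGroup E] [NormedSpace ℝ E]
    (α : ℝ) (y : E) : ℝ≥0∞ :=
  ENNReal.ofReal (‖y‖ ^ (α - (finrank ℝ E : ℝ)))

lemma rpow_tsum_le_tsum_rpow {ι : Type*} (a : ι → ℝ≥0∞) {p : ℝ} (hp : 0 < p) (hp1 : p ≤ 1) :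
    (∑' i, a i) ^ p ≤ ∑' i, a i ^ p := by
  have partial_sums (s : Finset ι) : (∑ i ∈ s, a i) ^ p ≤ ∑ i ∈ s, a i ^ p :=
    Finset.le_sum_of_subadditive (· ^ p) (ENNReal.zero_rpow_of_pos hp).le
      (fun x y => ENNReal.rpow_add_le_add_rpow x y hp.le hp1) s a
  exact le_of_tendsto' ((ENNReal.continuous_rpow_const.tendsto _).comp ENNReal.summable.hasSum)
    fun s => (partial_sums s).trans (ENNReal.sum_le_tsum s)

section MeasureSpace

variable {X : Type*} [MeasurableSpace X] {μ : Measure X}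

lemma setLIntegral_rpow_le {s : Set X} {h : X → ℝ≥0∞} (hh : AEMeasurable h (μ.restrict s))
    {p : ℝ} (hp : 0 ≤ p) (hp1 : p ≤ 1) :
    ∫⁻ x in s, h x ^ p ∂μ ≤ μ s ^ (1 - p) * (∫⁻ x in s, h x ∂μ) ^ p := by
  simpa using ENNReal.lintegral_mul_norm_pow_le (μ := μ.restrict s)
    (aemeasurable_const (b := 1)) hh (sub_nonneg.2 hp1) hp (sub_add_cancel 1 p)

lemma rpow_mul_meas_ge_le_lintegral_rpow {h : X → ℝ≥0∞} (hh : AEMeasurable h μ) {p : ℝ}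
    (hp : 0 < p) (ε : ℝ≥0∞) : ε ^ p * μ {x | ε ≤ h x} ≤ ∫⁻ x, h x ^ p ∂μ := by
  simpa only [ENNReal.rpow_le_rpow_iff hp] using
    mul_meas_ge_le_lintegral₀ (hh.pow_const p) (ε ^ p)

end MeasureSpace

lemma setLIntegral_closedBall_eq {E : Type*} [NormedAddCommGroup E] [MeasurableSpace E]
    [BorelSpace E] {μ : Measure E} (h : E → ℝ≥0∞) (z : E) (r : ℝ) :
    ∫⁻ x in closedBall z r, h x ∂μ =
      ∫⁻ x, (closedBall (0 : E) r).indicator 1 (x - z) * h x ∂μ := by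
  rw [← lintegral_indicator isClosed_closedBall.measurableSet]
  congr! 2 with x
  by_cases hx : x ∈ closedBall z r <;> simp_all [dist_eq_norm]

variable {E : Type*} [NormedAddCommGroup E] [NormedSpace ℝ E] {α θ : ℝ}

section RieszKernel

lemma rieszKernel_le_of_le_norm (hα : α ≤ finrank ℝ E) {r : ℝ} (hr : 0 < r) {y : E}
    (hy : r ≤ ‖y‖) : rieszKernel α y ≤ ENNReal.ofReal (r ^ (α - (finrank ℝ E : ℝ))) :=
  ENNReal.ofReal_le_ofReal (Real.rpow_le_rpow_of_nonpos hr hy (sub_nonpos.2 hα))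

lemma rieszKernel_le_indicator_add_const (hα : α ≤ finrank ℝ E) {R : ℝ} (hR : 0 < R) (y : E) :
    rieszKernel α y ≤ (closedBall 0 R).indicator (rieszKernel α) y +
      ENNReal.ofReal (R ^ (α - (finrank ℝ E : ℝ))) := by
  by_cases hy : y ∈ closedBall 0 R
  · simp [hy]
  · rw [mem_closedBall_zero_iff, not_le] at hy
    exact (rieszKernel_le_of_le_norm hα hR hy.le).trans le_add_self

lemma indicator_rieszKernel_le_tsum (hα : α < finrank ℝ E) {R : ℝ} (hR : 0 < R) (y : E) :
    (closedBall 0 R).indicator (rieszKernel α) y ≤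
      ∑' k : ℕ, ENNReal.ofReal ((R * (1 / 2) ^ k / 2) ^ (α - (finrank ℝ E : ℝ))) *
        (closedBall 0 (R * (1 / 2) ^ k)).indicator 1 y := by
  by_cases hy : y ∈ closedBall 0 R
  swap
  · simp [hy]
  rw [Set.indicator_of_mem hy]
  rcases eq_or_ne y 0 with rfl | hy₀
  · simp [rieszKernel, Real.zero_rpow (sub_neg.2 hα).ne]
  obtain ⟨k, lower, upper⟩ := exists_nat_pow_near_of_lt_one (div_pos (norm_pos_iff.2 hy₀) hR)
    ((div_le_one hR).2 (mem_closedBall_zero_iff.1 hy)) one_half_pos one_half_lt_one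
  rw [lt_div_iff₀' hR, pow_succ, ← mul_assoc, mul_one_div] at lower
  rw [div_le_iff₀' hR] at upper
  refine le_trans ?_ (ENNReal.le_tsum k)
  rw [Set.indicator_of_mem (mem_closedBall_zero_iff.2 upper), Pi.one_apply, mul_one]
  exact rieszKernel_le_of_le_norm hα.le (by positivity) lower.le

lemma div_two_rpow_mul_pow_rpow_half {r : ℝ} (hr : 0 < r) (n : ℕ) :
    ((r / 2) ^ (α - (n : ℝ)) * r ^ n) ^ (1 / 2 : ℝ) =
      (2 ^ ((n : ℝ) - α)) ^ (1 / 2 : ℝ) * r ^ (α / 2) := by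
  have merge : (r / 2) ^ (α - (n : ℝ)) * r ^ n = 2 ^ ((n : ℝ) - α) * r ^ α := by
    rw [Real.div_rpow hr.le two_pos.le, ← Real.rpow_natCast r n, div_mul_eq_mul_div,
      ← Real.rpow_add hr, sub_add_cancel, ← neg_sub (n : ℝ) α, Real.rpow_neg two_pos.le,
      div_inv_eq_mul, mul_comm]
  rw [merge, Real.mul_rpow (by positivity) (by positivity), ← Real.rpow_mul hr.le, mul_one_div]

lemma tsum_ofReal_mul_half_pow_rpow {R : ℝ} (hR : 0 ≤ R) (s : ℝ) :
    ∑' k : ℕ, ENNReal.ofReal ((R * (1 / 2) ^ k) ^ s) =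
      ENNReal.ofReal (R ^ s) * (1 - ENNReal.ofReal ((1 / 2) ^ s))⁻¹ := by
  rw [← ENNReal.tsum_geometric, ← ENNReal.tsum_mul_left]
  congr! 2 with k
  rw [Real.mul_rpow hR (by positivity), ENNReal.ofReal_mul (by positivity),
    ← Real.rpow_pow_comm (by positivity), ENNReal.ofReal_pow (by positivity)]

end RieszKernel

variable [MeasurableSpace E] {μ : Measure E} {K K' f g : E → ℝ≥0∞}

section Kernel

lemma bilinearIntegral_mono_kernel (hK : ∀ y, K y ≤ K' y) (x : E) :
    bilinearIntegral μ θ K f g x ≤ bilinearIntegral μ θ K' f g x :=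
  lintegral_mono fun y => mul_le_mul_right (hK y) _

variable [BorelSpace E]

lemma bilinearIntegral_add_kernel (hf : Measurable f) (hg : Measurable g) (hK : Measurable K)
    (x : E) : bilinearIntegral μ θ (fun y => K y + K' y) f g x =
      bilinearIntegral μ θ K f g x + bilinearIntegral μ θ K' f g x := by
  simp only [bilinearIntegral, mul_add]
  exact lintegral_add_left (by fun_prop) _

lemma bilinearIntegral_const_mul_kernel (c : ℝ≥0∞) (hf : Measurable f) (hg : Measurable g)
    (hK : Measurable K) (x : E) :
    bilinearIntegral μ θ (fun y => c * K y) f g x = c * bilinearIntegral μ θ K f g x := by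
  simp only [bilinearIntegral, mul_left_comm _ c]
  exact lintegral_const_mul c (by fun_prop)

lemma bilinearIntegral_tsum_kernel {ι : Type*} [Countable ι] {k : ι → E → ℝ≥0∞}
    (hf : Measurable f) (hg : Measurable g) (hk : ∀ i, Measurable (k i)) (x : E) :
    bilinearIntegral μ θ (fun y => ∑' i, k i y) f g x =
      ∑' i, bilinearIntegral μ θ (k i) f g x := by
  simp only [bilinearIntegral, ← ENNReal.tsum_mul_left]
  exact lintegral_tsum fun i => by fun_prop

variable [FiniteDimensional ℝ E]

lemma measurable_bilinearIntegral [SFinite μ] (hf : Measurable f) (hg : Measurable g)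
    (hK : Measurable K) : Measurable (bilinearIntegral μ θ K f g) :=
  Measurable.lintegral_prod_right'
    (f := fun p : E × E => f (p.1 + (θ - 1) • p.2) * g (p.1 + θ • p.2) * K p.2) (by fun_prop)

lemma lintegral_bilinearIntegral_const [SFinite μ] [μ.IsAddLeftInvariant] (c : ℝ≥0∞)
    (hf : Measurable f) (hg : Measurable g) :
    ∫⁻ x, bilinearIntegral μ θ (fun _ => c) f g x ∂μ = (∫⁻ x, f x ∂μ) * (∫⁻ x, g x ∂μ) * c := by
  have translate (y : E) : ∫⁻ x, f (x + (θ - 1) • y) * g (x + θ • y) * c ∂μ =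
      ∫⁻ x, f x * g (x + y) * c ∂μ := by
    rw [← lintegral_add_right_eq_self (fun x => f x * g (x + y) * c) ((θ - 1) • y)]
    congr! 5
    module
  calc ∫⁻ x, bilinearIntegral μ θ (fun _ => c) f g x ∂μ
      = ∫⁻ y, ∫⁻ x, f x * g (x + y) * c ∂μ ∂μ := by
        simp only [bilinearIntegral]
        rw [lintegral_lintegral_swap (by fun_prop)]
        simp only [translate]
    _ = ∫⁻ x, f x * (∫⁻ y, g y ∂μ) * c ∂μ := by
        rw [lintegral_lintegral_swap (by fun_prop)]
        congr! 2 with x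
        rw [lintegral_mul_const _ (by fun_prop), lintegral_const_mul _ (by fun_prop),
          lintegral_add_left_eq_self g x]
    _ = (∫⁻ x, f x ∂μ) * (∫⁻ x, g x ∂μ) * c := by
        rw [lintegral_mul_const _ (by fun_prop), lintegral_mul_const _ hf]

lemma lintegral_rpow_bilinearIntegral_le_tsum [SFinite μ] {ι : Type*} [Countable ι]
    {c : ι → ℝ≥0∞} {k : ι → E → ℝ≥0∞} {p : ℝ} (hp : 0 < p) (hp1 : p ≤ 1) (hf : Measurable f)
    (hg : Measurable g) (hk : ∀ i, Measurable (k i)) (hK : ∀ y, K y ≤ ∑' i, c i * k i y) :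
    ∫⁻ x, bilinearIntegral μ θ K f g x ^ p ∂μ ≤
      ∑' i, c i ^ p * ∫⁻ x, bilinearIntegral μ θ (k i) f g x ^ p ∂μ := by
  have hB (i : ι) : Measurable (bilinearIntegral μ θ (k i) f g) :=
    measurable_bilinearIntegral hf hg (hk i)
  have pointwise (x : E) : bilinearIntegral μ θ K f g x ^ p ≤
      ∑' i, c i ^ p * bilinearIntegral μ θ (k i) f g x ^ p := by
    calc bilinearIntegral μ θ K f g x ^ p
        ≤ (∑' i, c i * bilinearIntegral μ θ (k i) f g x) ^ p := by
          gcongr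
          refine (bilinearIntegral_mono_kernel hK x).trans_eq ?_
          rw [bilinearIntegral_tsum_kernel hf hg fun i => (hk i).const_mul (c i)]
          simp only [bilinearIntegral_const_mul_kernel _ hf hg (hk _)]
      _ ≤ ∑' i, (c i * bilinearIntegral μ θ (k i) f g x) ^ p := rpow_tsum_le_tsum_rpow _ hp hp1
      _ = ∑' i, c i ^ p * bilinearIntegral μ θ (k i) f g x ^ p := by
          simp only [ENNReal.mul_rpow_of_nonneg _ _ hp.le]
  refine (lintegral_mono pointwise).trans_eq ?_
  rw [lintegral_tsum fun i => by fun_prop]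
  exact tsum_congr fun i => lintegral_const_mul _ ((hB i).pow_const p)

end Kernel

section Truncation

lemma bilinearIntegral_closedBall_le {r : ℝ} {z x : E} (hθ : θ ∈ Set.Icc (0 : ℝ) 1)
    (hx : x ∈ closedBall z r) :
    bilinearIntegral μ θ ((closedBall 0 r).indicator 1) f g x ≤
      bilinearIntegral μ θ (fun _ => 1) ((closedBall z (2 * r)).indicator f)
        ((closedBall z (2 * r)).indicator g) x := by
  refine lintegral_mono fun y => ?_
  by_cases hy : y ∈ closedBall 0 r
  · have mem_double (c : ℝ) (hc : |c| ≤ 1) : x + c • y ∈ closedBall z (2 * r) := by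
      rw [mem_closedBall_iff_norm] at hx ⊢
      rw [mem_closedBall_zero_iff] at hy
      calc ‖x + c • y - z‖ = ‖(x - z) + c • y‖ := by congr 1; abel
        _ ≤ ‖x - z‖ + |c| * ‖y‖ := (norm_add_le _ _).trans_eq (by rw [norm_smul, Real.norm_eq_abs])
        _ ≤ r + 1 * r := by gcongr
        _ = 2 * r := by ring
    have hθ₁ : |θ - 1| ≤ 1 := abs_le.2 ⟨by linarith [hθ.1], by linarith [hθ.2]⟩
    have hθ₂ : |θ| ≤ 1 := abs_le.2 ⟨by linarith [hθ.1], hθ.2⟩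
    simp [hy, mem_double _ hθ₁, mem_double _ hθ₂]
  · simp [hy]

variable [BorelSpace E] [FiniteDimensional ℝ E] [μ.IsAddHaarMeasure]

lemma lintegral_setLIntegral_closedBall {h : E → ℝ≥0∞} (hh : Measurable h) (r : ℝ) :
    ∫⁻ z, ∫⁻ x in closedBall z r, h x ∂μ ∂μ = μ (closedBall 0 r) * ∫⁻ x, h x ∂μ := by
  have hφ : Measurable ((closedBall (0 : E) r).indicator (1 : E → ℝ≥0∞)) :=
    measurable_one.indicator isClosed_closedBall.measurableSet
  simp only [setLIntegral_closedBall_eq]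
  rw [lintegral_lintegral_swap (by fun_prop), ← lintegral_const_mul _ hh]
  congr! 2 with x
  rw [lintegral_mul_const _ (by fun_prop),
    lintegral_sub_left_eq_self ((closedBall (0 : E) r).indicator 1) x,
    lintegral_indicator_one isClosed_closedBall.measurableSet]

lemma measurable_setLIntegral_closedBall {h : E → ℝ≥0∞} (hh : Measurable h) (r : ℝ) :
    Measurable fun z => ∫⁻ x in closedBall z r, h x ∂μ := by
  have hφ : Measurable ((closedBall (0 : E) r).indicator (1 : E → ℝ≥0∞)) :=
    measurable_one.indicator isClosed_closedBall.measurableSet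
  simp only [setLIntegral_closedBall_eq]
  exact Measurable.lintegral_prod_right'
    (f := fun p : E × E => (closedBall (0 : E) r).indicator 1 (p.2 - p.1) * h p.2) (by fun_prop)

lemma setLIntegral_bilinearIntegral_closedBall_le (hθ : θ ∈ Set.Icc (0 : ℝ) 1)
    (hf : Measurable f) (hg : Measurable g) (z : E) (r : ℝ) :
    ∫⁻ x in closedBall z r, bilinearIntegral μ θ ((closedBall 0 r).indicator 1) f g x ∂μ ≤
      (∫⁻ x in closedBall z (2 * r), f x ∂μ) * ∫⁻ x in closedBall z (2 * r), g x ∂μ := by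
  have hball : MeasurableSet (closedBall z (2 * r)) := isClosed_closedBall.measurableSet
  calc ∫⁻ x in closedBall z r, bilinearIntegral μ θ ((closedBall 0 r).indicator 1) f g x ∂μ
      ≤ ∫⁻ x in closedBall z r, bilinearIntegral μ θ (fun _ => 1)
          ((closedBall z (2 * r)).indicator f) ((closedBall z (2 * r)).indicator g) x ∂μ :=
        setLIntegral_mono' isClosed_closedBall.measurableSet
          fun _ hx => bilinearIntegral_closedBall_le hθ hx
    _ ≤ ∫⁻ x, bilinearIntegral μ θ (fun _ => 1)
          ((closedBall z (2 * r)).indicator f) ((closedBall z (2 * r)).indicator g) x ∂μ :=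
        setLIntegral_le_lintegral _ _
    _ = _ := by
        rw [lintegral_bilinearIntegral_const _ (hf.indicator hball) (hg.indicator hball), mul_one,
          lintegral_indicator hball, lintegral_indicator hball]

lemma setLIntegral_rpow_half_bilinearIntegral_closedBall_le (hθ : θ ∈ Set.Icc (0 : ℝ) 1)
    (hf : Measurable f) (hg : Measurable g) (z : E) (r : ℝ) :
    ∫⁻ x in closedBall z r,
        bilinearIntegral μ θ ((closedBall 0 r).indicator 1) f g x ^ (1 / 2 : ℝ) ∂μ ≤
      μ (closedBall 0 r) ^ (1 / 2 : ℝ) *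
        ((∫⁻ x in closedBall z (2 * r), f x ∂μ) ^ (1 / 2 : ℝ) *
          (∫⁻ x in closedBall z (2 * r), g x ∂μ) ^ (1 / 2 : ℝ)) := by
  have hB : Measurable (bilinearIntegral μ θ ((closedBall 0 r).indicator 1) f g) :=
    measurable_bilinearIntegral hf hg (measurable_one.indicator isClosed_closedBall.measurableSet)
  refine (setLIntegral_rpow_le hB.aemeasurable one_half_pos.le one_half_lt_one.le).trans ?_
  rw [← ENNReal.mul_rpow_of_nonneg _ _ one_half_pos.le, Measure.addHaar_closedBall_center,
    sub_half (1 : ℝ)]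
  gcongr
  exact setLIntegral_bilinearIntegral_closedBall_le hθ hf hg z r

lemma lintegral_rpow_half_bilinearIntegral_closedBall_le (hθ : θ ∈ Set.Icc (0 : ℝ) 1)
    (hf : Measurable f) (hg : Measurable g) {r : ℝ} (hr : 0 < r) :
    ∫⁻ x, bilinearIntegral μ θ ((closedBall 0 r).indicator 1) f g x ^ (1 / 2 : ℝ) ∂μ ≤
      2 ^ finrank ℝ E * μ (closedBall 0 r) ^ (1 / 2 : ℝ) *
        ((∫⁻ x, f x ∂μ) * ∫⁻ x, g x ∂μ) ^ (1 / 2 : ℝ) := by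
  have hB : Measurable (bilinearIntegral μ θ ((closedBall 0 r).indicator 1) f g) :=
    measurable_bilinearIntegral hf hg (measurable_one.indicator isClosed_closedBall.measurableSet)
  have hF := measurable_setLIntegral_closedBall (μ := μ) hf (2 * r)
  have hG := measurable_setLIntegral_closedBall (μ := μ) hg (2 * r)
  have double : μ (closedBall 0 (2 * r)) = 2 ^ finrank ℝ E * μ (closedBall 0 r) := by
    simp [Measure.addHaar_closedBall_mul_of_pos μ 0 two_pos r]
  have average := setLIntegral_rpow_half_bilinearIntegral_closedBall_le (μ := μ) hθ hf hg (r := r)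
  have hW₀ : μ (closedBall 0 r) ≠ 0 := (measure_closedBall_pos _ _ hr).ne'
  have hW : μ (closedBall 0 r) ≠ ∞ := measure_closedBall_lt_top.ne
  set W := μ (closedBall 0 r)
  rw [← ENNReal.mul_le_mul_iff_right hW₀ hW, ← lintegral_setLIntegral_closedBall (by fun_prop)]
  calc _ ≤ ∫⁻ z, W ^ (1 / 2 : ℝ) * ((∫⁻ x in closedBall z (2 * r), f x ∂μ) ^ (1 / 2 : ℝ) *
          (∫⁻ x in closedBall z (2 * r), g x ∂μ) ^ (1 / 2 : ℝ)) ∂μ := lintegral_mono average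
    _ ≤ W ^ (1 / 2 : ℝ) * ((∫⁻ z, ∫⁻ x in closedBall z (2 * r), f x ∂μ ∂μ) ^ (1 / 2 : ℝ) *
          (∫⁻ z, ∫⁻ x in closedBall z (2 * r), g x ∂μ ∂μ) ^ (1 / 2 : ℝ)) := by
        rw [lintegral_const_mul _ (by fun_prop)]
        gcongr
        exact ENNReal.lintegral_mul_norm_pow_le hF.aemeasurable hG.aemeasurable
          one_half_pos.le one_half_pos.le (add_halves 1)
    _ = W ^ (1 / 2 : ℝ) * ((2 ^ finrank ℝ E * W) ^ (2 : ℝ) *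
          ((∫⁻ x, f x ∂μ) * ∫⁻ x, g x ∂μ)) ^ (1 / 2 : ℝ) := by
        rw [lintegral_setLIntegral_closedBall hf, lintegral_setLIntegral_closedBall hg, double,
          ← ENNReal.mul_rpow_of_nonneg _ _ one_half_pos.le, ENNReal.rpow_two]
        ring_nf
    _ = _ := by
        rw [ENNReal.mul_rpow_of_nonneg _ _ one_half_pos.le, ← ENNReal.rpow_mul,
          mul_one_div_cancel two_ne_zero, ENNReal.rpow_one]
        ring

end Truncation

section NearPart

variable [BorelSpace E]

lemma measurable_rieszKernel : Measurable (rieszKernel α : E → ℝ≥0∞) := by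
  unfold rieszKernel
  fun_prop

variable [FiniteDimensional ℝ E]

lemma ofReal_rpow_half_mul_measure_closedBall_rpow_half (μ : Measure E) [μ.IsAddHaarMeasure]
    {r : ℝ} (hr : 0 < r) :
    ENNReal.ofReal ((r / 2) ^ (α - (finrank ℝ E : ℝ))) ^ (1 / 2 : ℝ) *
        μ (closedBall 0 r) ^ (1 / 2 : ℝ) =
      ENNReal.ofReal ((2 ^ ((finrank ℝ E : ℝ) - α)) ^ (1 / 2 : ℝ)) *
        μ (ball 0 1) ^ (1 / 2 : ℝ) * ENNReal.ofReal (r ^ (α / 2)) := by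
  rw [Measure.addHaar_closedBall μ 0 hr.le, ← ENNReal.mul_rpow_of_nonneg _ _ one_half_pos.le,
    ← mul_assoc, ← ENNReal.ofReal_mul (by positivity),
    ENNReal.mul_rpow_of_nonneg _ _ one_half_pos.le, ENNReal.ofReal_rpow_of_pos (by positivity),
    div_two_rpow_mul_pow_rpow_half hr, ENNReal.ofReal_mul (by positivity)]
  ring

lemma exists_lintegral_rpow_half_bilinearIntegral_indicator_rieszKernel_le (μ : Measure E)
    [μ.IsAddHaarMeasure] (hα₀ : 0 < α) (hα : α < finrank ℝ E) :
    ∃ C : ℝ≥0, ∀ θ ∈ Set.Icc (0 : ℝ) 1, ∀ f g : E → ℝ≥0∞, Measurable f → Measurable g →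
      ∀ R : ℝ, 0 < R →
        ∫⁻ x, bilinearIntegral μ θ ((closedBall 0 R).indicator (rieszKernel α)) f g x ^
            (1 / 2 : ℝ) ∂μ ≤
          C * ENNReal.ofReal (R ^ (α / 2)) *
            ((∫⁻ x, f x ∂μ) * ∫⁻ x, g x ∂μ) ^ (1 / 2 : ℝ) := by
  obtain ⟨D, hD⟩ : ∃ D : ℝ≥0, (D : ℝ≥0∞) = 2 ^ finrank ℝ E *
      (ENNReal.ofReal ((2 ^ ((finrank ℝ E : ℝ) - α)) ^ (1 / 2 : ℝ)) *
        μ (ball 0 1) ^ (1 / 2 : ℝ)) := by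
    have hball : μ (ball (0 : E) 1) ^ (1 / 2 : ℝ) ≠ ∞ :=
      ENNReal.rpow_ne_top_of_nonneg one_half_pos.le measure_ball_lt_top.ne
    exact WithTop.ne_top_iff_exists.1 <| ENNReal.mul_ne_top (ENNReal.pow_ne_top (by simp))
      (ENNReal.mul_ne_top ENNReal.ofReal_ne_top hball)
  obtain ⟨S, hS⟩ : ∃ S : ℝ≥0, (S : ℝ≥0∞) = (1 - ENNReal.ofReal ((1 / 2) ^ (α / 2)))⁻¹ := by
    have ratio_lt_one : ((1 : ℝ) / 2) ^ (α / 2) < 1 :=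
      Real.rpow_lt_one one_half_pos.le one_half_lt_one (half_pos hα₀)
    exact WithTop.ne_top_iff_exists.1 <| ENNReal.inv_ne_top.2
      (tsub_pos_of_lt (ENNReal.ofReal_lt_one.2 ratio_lt_one)).ne'
  refine ⟨D * S, fun θ hθ f g hf hg R hR => ?_⟩
  refine (lintegral_rpow_bilinearIntegral_le_tsum one_half_pos one_half_lt_one.le hf hg
    (fun k => measurable_one.indicator isClosed_closedBall.measurableSet)
    (indicator_rieszKernel_le_tsum hα hR)).trans ?_
  set P := ((∫⁻ x, f x ∂μ) * ∫⁻ x, g x ∂μ) ^ (1 / 2 : ℝ)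
  calc _ ≤ ∑' k : ℕ, D * P * ENNReal.ofReal ((R * (1 / 2) ^ k) ^ (α / 2)) := by
        refine ENNReal.tsum_le_tsum fun k => ?_
        have hr : 0 < R * (1 / 2) ^ k := by positivity
        refine (mul_le_mul_right
          (lintegral_rpow_half_bilinearIntegral_closedBall_le hθ hf hg hr) _).trans_eq ?_
        rw [← mul_assoc, mul_left_comm,
          ofReal_rpow_half_mul_measure_closedBall_rpow_half μ hr, hD]
        ring
    _ = _ := by
        rw [ENNReal.tsum_mul_left, tsum_ofReal_mul_half_pow_rpow hR.le, ← hS, ENNReal.coe_mul]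
        ring

end NearPart

section WeakType

variable [BorelSpace E]

lemma bilinearIntegral_rieszKernel_le (hα : α ≤ finrank ℝ E) (hf : Measurable f)
    (hg : Measurable g) {R : ℝ} (hR : 0 < R) (x : E) :
    bilinearIntegral μ θ (rieszKernel α) f g x ≤
      bilinearIntegral μ θ ((closedBall 0 R).indicator (rieszKernel α)) f g x +
        bilinearIntegral μ θ (fun _ => ENNReal.ofReal (R ^ (α - (finrank ℝ E : ℝ)))) f g x :=
  (bilinearIntegral_mono_kernel (rieszKernel_le_indicator_add_const hα hR) x).trans_eq
    (bilinearIntegral_add_kernel hf hg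
      (measurable_rieszKernel.indicator isClosed_closedBall.measurableSet) x)

variable [FiniteDimensional ℝ E]

lemma measure_le_bilinearIntegral_const_le [μ.IsAddHaarMeasure] (hf : Measurable f)
    (hg : Measurable g) {R t : ℝ} (hR : 0 < R) (ht : 0 < t)
    (hP : (∫⁻ x, f x ∂μ) * ∫⁻ x, g x ∂μ ≤ ENNReal.ofReal (t * R ^ (2 * finrank ℝ E - α))) :
    μ {x | ENNReal.ofReal t ≤ bilinearIntegral μ θ
        (fun _ => ENNReal.ofReal (R ^ (α - (finrank ℝ E : ℝ)))) f g x} ≤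
      ENNReal.ofReal (R ^ finrank ℝ E) := by
  have combine : R ^ (2 * finrank ℝ E - α) * R ^ (α - finrank ℝ E) = R ^ finrank ℝ E := by
    rw [← Real.rpow_add hR, ← Real.rpow_natCast]
    ring_nf
  rw [← ENNReal.mul_le_mul_iff_right (ENNReal.ofReal_pos.2 ht).ne' ENNReal.ofReal_ne_top]
  refine (mul_meas_ge_le_lintegral
    (measurable_bilinearIntegral hf hg measurable_const) _).trans ?_
  rw [lintegral_bilinearIntegral_const _ hf hg]
  refine (mul_le_mul_left hP _).trans_eq ?_
  rw [← ENNReal.ofReal_mul (by positivity), ← ENNReal.ofReal_mul ht.le, mul_assoc, combine]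

lemma exists_measure_le_bilinearIntegral_indicator_rieszKernel_le (μ : Measure E)
    [μ.IsAddHaarMeasure] (hα₀ : 0 < α) (hα : α < finrank ℝ E) :
    ∃ C : ℝ≥0, ∀ θ ∈ Set.Icc (0 : ℝ) 1, ∀ f g : E → ℝ≥0∞, Measurable f → Measurable g →
      ∀ R t : ℝ, 0 < R → 0 < t →
        (∫⁻ x, f x ∂μ) * ∫⁻ x, g x ∂μ ≤ ENNReal.ofReal (t * R ^ (2 * finrank ℝ E - α)) →
        μ {x | ENNReal.ofReal t ≤
            bilinearIntegral μ θ ((closedBall 0 R).indicator (rieszKernel α)) f g x} ≤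
          C * ENNReal.ofReal (R ^ finrank ℝ E) := by
  obtain ⟨C, hC⟩ :=
    exists_lintegral_rpow_half_bilinearIntegral_indicator_rieszKernel_le μ hα₀ hα
  refine ⟨C, fun θ hθ f g hf hg R t hR ht hP => ?_⟩
  have hB : Measurable (bilinearIntegral μ θ ((closedBall 0 R).indicator (rieszKernel α)) f g) :=
    measurable_bilinearIntegral hf hg
      (measurable_rieszKernel.indicator isClosed_closedBall.measurableSet)
  have combine : R ^ (α / 2) * (t * R ^ (2 * finrank ℝ E - α)) ^ (1 / 2 : ℝ) =
      t ^ (1 / 2 : ℝ) * R ^ finrank ℝ E := by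
    rw [Real.mul_rpow ht.le (by positivity), ← Real.rpow_mul hR.le, mul_left_comm,
      ← Real.rpow_add hR, ← Real.rpow_natCast]
    ring_nf
  have ht' : 0 < ENNReal.ofReal (t ^ (1 / 2 : ℝ)) := ENNReal.ofReal_pos.2 (by positivity)
  rw [← ENNReal.mul_le_mul_iff_right ht'.ne' ENNReal.ofReal_ne_top]
  calc _ ≤ C * ENNReal.ofReal (R ^ (α / 2)) *
          ((∫⁻ x, f x ∂μ) * ∫⁻ x, g x ∂μ) ^ (1 / 2 : ℝ) := by
        rw [← ENNReal.ofReal_rpow_of_pos ht]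
        exact (rpow_mul_meas_ge_le_lintegral_rpow hB.aemeasurable one_half_pos _).trans
          (hC θ hθ f g hf hg R hR)
    _ ≤ C * ENNReal.ofReal (R ^ (α / 2)) *
          ENNReal.ofReal (t * R ^ (2 * finrank ℝ E - α)) ^ (1 / 2 : ℝ) := by gcongr
    _ = _ := by
        rw [ENNReal.ofReal_rpow_of_pos (by positivity), mul_assoc,
          ← ENNReal.ofReal_mul (by positivity), combine, ENNReal.ofReal_mul (by positivity)]
        ring

lemma exists_measure_lt_bilinearIntegral_rieszKernel_le (μ : Measure E) [μ.IsAddHaarMeasure]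
    (hα₀ : 0 < α) (hα : α < finrank ℝ E) :
    ∃ C : ℝ, 0 < C ∧ ∀ θ ∈ Set.Icc (0 : ℝ) 1, ∀ f g : E → ℝ≥0∞, Measurable f → Measurable g →
      ∀ R lam : ℝ, 0 < R → 0 < lam →
        (∫⁻ x, f x ∂μ) * ∫⁻ x, g x ∂μ ≤ ENNReal.ofReal (lam / 2 * R ^ (2 * finrank ℝ E - α)) →
        μ {x | ENNReal.ofReal lam < bilinearIntegral μ θ (rieszKernel α) f g x} ≤
          ENNReal.ofReal (C * R ^ finrank ℝ E) := by
  obtain ⟨C, hC⟩ := exists_measure_le_bilinearIntegral_indicator_rieszKernel_le μ hα₀ hα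
  refine ⟨C + 1, by positivity, fun θ hθ f g hf hg R lam hR hlam hP => ?_⟩
  set near := bilinearIntegral μ θ ((closedBall 0 R).indicator (rieszKernel α)) f g
  set far := bilinearIntegral μ θ (fun _ => ENNReal.ofReal (R ^ (α - (finrank ℝ E : ℝ)))) f g
  have cover : {x | ENNReal.ofReal lam < bilinearIntegral μ θ (rieszKernel α) f g x} ⊆
      {x | ENNReal.ofReal (lam / 2) ≤ near x} ∪ {x | ENNReal.ofReal (lam / 2) ≤ far x} := by
    intro x hx
    by_contra hsmall
    simp only [Set.mem_union, Set.mem_ofPred_eq, not_or, not_le] at hsmall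
    have hlt := (bilinearIntegral_rieszKernel_le hα.le hf hg hR x).trans_lt
      (ENNReal.add_lt_add hsmall.1 hsmall.2)
    rw [← ENNReal.ofReal_add (by positivity) (by positivity), add_halves] at hlt
    exact lt_asymm hlt hx
  calc _ ≤ μ {x | ENNReal.ofReal (lam / 2) ≤ near x} + μ {x | ENNReal.ofReal (lam / 2) ≤ far x} :=
        (measure_mono cover).trans (measure_union_le _ _)
    _ ≤ C * ENNReal.ofReal (R ^ finrank ℝ E) + ENNReal.ofReal (R ^ finrank ℝ E) :=
        add_le_add (hC θ hθ f g hf hg R _ hR (half_pos hlam) hP)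
          (measure_le_bilinearIntegral_const_le hf hg hR (half_pos hlam) hP)
    _ = ENNReal.ofReal ((C + 1) * R ^ finrank ℝ E) := by
        rw [ENNReal.ofReal_mul (by positivity), ENNReal.ofReal_add (by positivity) zero_le_one,
          ENNReal.ofReal_coe_nnreal, ENNReal.ofReal_one, add_one_mul]

lemma weakLpNorm_le_of_measure_lt_le {X : Type*} [MeasurableSpace X] {ν : Measure X}
    {h : X → ℝ≥0∞} {P : ℝ≥0∞} {C : ℝ} {n : ℕ} (hC : 0 < C) (hn : n ≠ 0) (hα : α < 2 * n)
    (hP : ∀ R lam : ℝ, 0 < R → 0 < lam → P ≤ ENNReal.ofReal (lam / 2 * R ^ (2 * n - α)) →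
      ν {x | ENNReal.ofReal lam < h x} ≤ ENNReal.ofReal (C * R ^ n)) :
    weakLpNorm ν (n / (2 * n - α)) h ≤ ENNReal.ofReal (2 * C ^ ((2 * n - α) / n)) * P := by
  set q : ℝ := 2 * n - α
  have hq : 0 < q := sub_pos.2 hα
  have hc : 0 < 2 * C ^ (q / n) := by positivity
  refine iSup₂_le fun lam hlam => ?_
  rw [one_div_div, mul_comm (ENNReal.ofReal (2 * _)),
    ← ENNReal.div_le_iff (ENNReal.ofReal_pos.2 hc).ne' ENNReal.ofReal_ne_top]
  refine le_of_forall_gt_imp_ge_of_dense fun b hb => ?_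
  rw [ENNReal.div_le_iff (ENNReal.ofReal_pos.2 hc).ne' ENNReal.ofReal_ne_top]
  rcases eq_or_ne b ∞ with rfl | hb_top
  · rw [ENNReal.top_mul (ENNReal.ofReal_pos.2 hc).ne']
    exact le_top
  lift b to ℝ≥0 using hb_top
  have hb₀ : 0 < (b : ℝ) := by exact_mod_cast pos_of_gt hb
  obtain ⟨R, hR, hRb⟩ : ∃ R : ℝ, 0 < R ∧ lam / 2 * R ^ q = b := by
    refine ⟨(2 * b / lam) ^ (1 / q), by positivity, ?_⟩
    rw [← Real.rpow_mul (by positivity), one_div_mul_cancel hq.ne', Real.rpow_one]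
    field_simp
  have level : ν {x | ENNReal.ofReal lam < h x} ≤ ENNReal.ofReal (C * R ^ n) :=
    hP R lam hR hlam (by rw [hRb, ENNReal.ofReal_coe_nnreal]; exact hb.le)
  calc ENNReal.ofReal lam * ν {x | ENNReal.ofReal lam < h x} ^ (q / n)
      ≤ ENNReal.ofReal lam * ENNReal.ofReal (C * R ^ n) ^ (q / n) := by gcongr
    _ = ENNReal.ofReal (lam * (C ^ (q / n) * R ^ q)) := by
        rw [ENNReal.ofReal_rpow_of_pos (by positivity), ← ENNReal.ofReal_mul hlam.le,
          Real.mul_rpow hC.le (by positivity), ← Real.rpow_natCast R, ← Real.rpow_mul hR.le,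
          mul_div_cancel₀ q (Nat.cast_ne_zero.2 hn)]
    _ = b * ENNReal.ofReal (2 * C ^ (q / n)) := by
        rw [← ENNReal.ofReal_coe_nnreal, ← ENNReal.ofReal_mul b.coe_nonneg, ← hRb]
        ring_nf

theorem stmt9_general (μ : Measure E) [μ.IsAddHaarMeasure] (hα₀ : 0 < α)
    (hα : α < finrank ℝ E) :
    ∃ c₁ : ℝ, 0 < c₁ ∧ ∀ θ ∈ Set.Icc (0 : ℝ) 1, ∀ f g : E → ℝ≥0∞, Measurable f → Measurable g →
      weakLpNorm μ (finrank ℝ E / (2 * finrank ℝ E - α))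
          (bilinearIntegral μ θ (rieszKernel α) f g) ≤
        ENNReal.ofReal c₁ * (∫⁻ x, f x ∂μ) * ∫⁻ x, g x ∂μ := by
  obtain ⟨C, hC, distribution⟩ := exists_measure_lt_bilinearIntegral_rieszKernel_le μ hα₀ hα
  have hn : finrank ℝ E ≠ 0 := by exact_mod_cast (hα₀.trans hα).ne'
  refine ⟨2 * C ^ ((2 * finrank ℝ E - α) / finrank ℝ E), by positivity,
    fun θ hθ f g hf hg => ?_⟩
  rw [mul_assoc]
  exact weakLpNorm_le_of_measure_lt_le hC hn (by linarith) (distribution θ hθ f g hf hg)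

end WeakType

lemma Iop_eq_bilinearIntegral (d : ℕ) (α θ : ℝ) (f g : EuclideanSpace ℝ (Fin d) → ℝ≥0∞) :
    Iop d α θ f g = bilinearIntegral volume θ (rieszKernel α) f g := by
  ext x
  simp only [Iop, bilinearIntegral, rieszKernel, finrank_euclideanSpace_fin]

lemma wLp_eq_weakLpNorm (d : ℕ) (r : ℝ) (h : EuclideanSpace ℝ (Fin d) → ℝ≥0∞) :
    wLp d r h = weakLpNorm volume r h :=
  rfl

theorem stmt9 (d : ℕ) (α : ℝ) (hα0 : 0 < α) (hαd : α < d) :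
    ∃ c₁ : ℝ, 0 < c₁ ∧
      ∀ θ : ℝ, θ ∈ Set.Icc (0 : ℝ) 1 →
        ∀ A B : Set (EuclideanSpace ℝ (Fin d)),
          MeasurableSet A → MeasurableSet B → volume A < ∞ → volume B < ∞ →
          wLp d ((d : ℝ) / (2 * d - α)) (Iop d α θ (A.indicator 1) (B.indicator 1)) ≤
            ENNReal.ofReal c₁ * volume A * volume B := by
  obtain ⟨c₁, hc₁, weak_type⟩ := stmt9_general
    (volume : Measure (EuclideanSpace ℝ (Fin d))) hα0 (by rwa [finrank_euclideanSpace_fin])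
  refine ⟨c₁, hc₁, fun θ hθ A B hA hB _ _ => ?_⟩
  simpa only [wLp_eq_weakLpNorm, Iop_eq_bilinearIntegral, finrank_euclideanSpace_fin,
    lintegral_indicator_one hA, lintegral_indicator_one hB] using
    weak_type θ hθ _ _ (measurable_one.indicator hA) (measurable_one.indicator hB)
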